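/- arXiv:2509.25737 — 4 statements merged into one kernel-verified Lean document; each statement's English description precedes it below -/
import Mathlib

section
/- Let R be a commutative ring, I an invertible R-module, and β : I × I → R a nondegenerate bilinear form. Then: (i) the R-linear map τ : I ⊗[R] I → R determined by τ(x ⊗ y) = β(x, y) is bijective; and (ii) for all x, x', y, y' ∈ I one has β(x, x') · β(y, y') = β(x, y) · β(x', y'). -/
open TensorProduct

/-- Let `R` be a commutative ring, `I` an invertible `R`-module (witnessed by
`J` and an isomorphism `I ⊗[R] J ≅ R`), and `β : I × I → R` a nondegenerate bilinear form,
i.e. an `R`-bilinear map whose adjoint `x ↦ β x` from `I` to `Hom_R(I, R)` is bijective.  Then: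
(i) the `R`-linear map `τ : I ⊗[R] I → R` determined by `τ(x ⊗ y) = β(x, y)` is bijective; and
(ii) `β(x, x')·β(y, y') = β(x, y)·β(x', y')` for all `x, x', y, y' ∈ I`. -/
theorem tensor_lift_bijective_and_mul_symm_of_nondegenerate
    {R : Type*} [CommRing R] {I : Type*} [AddCommGroup I] [Module R I]
    {J : Type*} [AddCommGroup J] [Module R J] (e : (I ⊗[R] J) ≃ₗ[R] R)
    (β : I →ₗ[R] I →ₗ[R] R) (hβ : Function.Bijective β) :
    Function.Bijective (TensorProduct.lift β) ∧
      ∀ x x' y y' : I, β x x' * β y y' = β x y * β x' y' := by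
  haveI : Module.Invertible R I := .left e
  have h1 : Function.Bijective (TensorProduct.lift β) := by
    have h : (TensorProduct.lift β) =
        (contractLeft R I) ∘ₗ (LinearEquiv.rTensor I (LinearEquiv.ofBijective β hβ)).toLinearMap := by
      ext x y
      simp [contractLeft]
    rw [h]
    exact (Module.Invertible.bijective (R := R) (M := I)).comp (LinearEquiv.bijective _)
  refine ⟨h1, ?_⟩
  obtain ⟨s, hs⟩ := (Module.Invertible.toModuleEnd_bijective R (I ⊗[R] I)).2
    (TensorProduct.comm R I I).toLinearMap
  have hsw : ∀ x y : I, x ⊗ₜ[R] y = s • (y ⊗ₜ[R] x) := fun x y => by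
    have := LinearMap.congr_fun hs (y ⊗ₜ[R] x)
    simpa using this.symm
  have hsβ : ∀ x y : I, β x y = s * β y x := fun x y => by
    simpa using congrArg (TensorProduct.lift β) (hsw x y)
  have hA : ∀ x x' y y' : I, β x x' * β y y' = s * (β x y * β x' y') := fun x x' y y' => by
    simpa using congrArg (LinearMap.mul' R R ∘ₗ TensorProduct.map (β x) (β.flip y')) (hsw x' y)
  have hsq : ∀ x y : I, (1 - s) * (β x y) ^ 2 = 0 := fun x y => by
    have h2 := hA x y x y
    have h3 := hsβ x x
    linear_combination (1 - s) * h2 + s * β y y * h3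
  have htop : Ideal.span (Set.range fun p : I × I => β p.1 p.2) = ⊤ := by
    rw [Ideal.eq_top_iff_one]
    obtain ⟨t, ht⟩ := h1.2 1
    rw [← ht]
    clear ht
    induction t with
    | zero => simp
    | tmul x y => exact Ideal.subset_span ⟨(x, y), by simp⟩
    | add a b ha hb => rw [map_add]; exact add_mem ha hb
  have hs1 : (1 - s) = 0 := by
    have h2 := Ideal.span_pow_eq_top _ htop 2
    have h3 : Ideal.span ((fun x : R => x ^ 2) '' (Set.range fun p : I × I => β p.1 p.2)) ≤
        LinearMap.ker (LinearMap.mulLeft R (1 - s)) := by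
      rw [Ideal.span, Submodule.span_le]
      rintro _ ⟨_, ⟨p, rfl⟩, rfl⟩
      simpa using hsq p.1 p.2
    rw [h2] at h3
    have := h3 (Submodule.mem_top (x := (1 : R)))
    simpa using this
  intro x x' y y'
  linear_combination hA x x' y y' - (β x y * β x' y') * hs1
end

section
/- Let R be a commutative ring and I an invertible R-module. Then there exists an R-module isomorphism I ⊗[R] I ≅ R if and only if I admits a nondegenerate bilinear form β : I × I → R (such a form is then automatically symmetric). -/
open TensorProduct

/-- Let `R` be a commutative ring and `I` an invertible `R`-module (witnessed
by `J` and an isomorphism `I ⊗[R] J ≅ R`).  Then there exists an `R`-module isomorphism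
`I ⊗[R] I ≅ R` if and only if `I` admits a nondegenerate bilinear form `β : I × I → R`
(i.e. an `R`-bilinear form whose adjoint `x ↦ β x : I → Hom_R(I, R)` is bijective); such a
form is then automatically symmetric. -/
theorem square_trivial_iff_exists_nondegenerate_form
    {R : Type*} [CommRing R] {I : Type*} [AddCommGroup I] [Module R I]
    {J : Type*} [AddCommGroup J] [Module R J] (e : (I ⊗[R] J) ≃ₗ[R] R) :
    Nonempty ((I ⊗[R] I) ≃ₗ[R] R) ↔
      ∃ β : I →ₗ[R] I →ₗ[R] R,
        Function.Bijective β ∧ ∀ x y : I, β x y = β y x := by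
  have hI : Module.Invertible R I := Module.Invertible.left e
  constructor
  · rintro ⟨f⟩
    refine ⟨TensorProduct.curry f.toLinearMap, Module.Invertible.bijective_curry f, ?_⟩
    intro x y
    simp only [TensorProduct.curry_apply, LinearEquiv.coe_coe]
    rw [Module.Invertible.tmul_comm]
  · rintro ⟨β, hβ, -⟩
    exact ⟨(LinearEquiv.ofBijective β hβ).rTensor I ≪≫ₗ Module.Invertible.linearEquiv R I⟩
end

section
/- Let (R, λ) be a commutative ring with involution, let K be the total ring of fractions of R (the localization of R at the multiplicative set of nonzerodivisors, with injective algebra map ι : R → K), and let λ_K : K → K be a ring automorphism satisfying λ_K ∘ ι = ι ∘ λ. Let I ⊆ K be an R-submodule such that I · λ_K(I) = ι(R)·1, i.e. the product of the submodule I with its image under λ_K equals the unit R-submodule of K. Then: (i) for all i, j ∈ I the element i·λ_K(j) lies in the image of ι, so there is a well-defined map β : I × I → R with ι(β(i, j)) = i·λ_K(j); (ii) β is a λ-sesquilinear λ-hermitian form on I; (iii) β is nondegenerate. -/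
/-- A `λ`-sesquilinear form on an `R`-module `M`, for a commutative ring `R` with involution
`lam`. -/
structure IsSesqForm {R : Type*} [CommRing R] (lam : R →+* R)
    {M : Type*} [AddCommGroup M] [Module R M] (β : M → M → R) : Prop where
  add_left : ∀ x x' y : M, β (x + x') y = β x y + β x' y
  add_right : ∀ x y y' : M, β x (y + y') = β x y + β x y'
  smul_left : ∀ (r : R) (x y : M), β (r • x) y = r * β x y
  smul_right : ∀ (r : R) (x y : M), β x (r • y) = lam r * β x y

/-- A form `β` is `λ`-hermitian if `β(x, y) = lam (β(y, x))`. -/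
def IsHermitian {R : Type*} [CommRing R] (lam : R →+* R)
    {M : Type*} (β : M → M → R) : Prop :=
  ∀ x y : M, β x y = lam (β y x)

/-- A form `β` is nondegenerate if its adjoint `x ↦ β(x, ·)` is a bijection from `M` onto the
`λ`-semilinear maps `M → R`. -/
def IsNondegen {R : Type*} [CommRing R] (lam : R →+* R)
    {M : Type*} [AddCommGroup M] [Module R M] (β : M → M → R) : Prop :=
  (∀ x x' : M, (∀ y : M, β x y = β x' y) → x = x') ∧
  ∀ f : M → R, (∀ y y' : M, f (y + y') = f y + f y') →
    (∀ (r : R) (y : M), f (r • y) = lam r * f y) →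
    ∃ x : M, ∀ y : M, β x y = f y

/-- Let `(R, λ)` be a commutative ring with involution, `K` the total ring of
fractions of `R` (the localization at the nonzerodivisors, with injective algebra map
`ι : R → K`), and `λ_K : K → K` a ring automorphism with `λ_K ∘ ι = ι ∘ λ`.  Let `I ⊆ K` be an
`R`-submodule with `I · λ_K(I) = 1` (the unit `R`-submodule of `K`).  Then: (i) for all
`i, j ∈ I` the element `i·λ_K(j)` lies in the image of `ι`, so there is a well-defined
`β : I × I → R` with `ι(β(i, j)) = i·λ_K(j)`; (ii) `β` is a `λ`-sesquilinear `λ`-hermitian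
form on `I`; (iii) `β` is nondegenerate. -/
theorem fractional_ideal_hermitian_form
    {R : Type*} [CommRing R] (lam : R →+* R) (hlam : ∀ r : R, lam (lam r) = r)
    (K : Type*) [CommRing K] [Algebra R K] [IsLocalization (nonZeroDivisors R) K]
    (hinj : Function.Injective (algebraMap R K))
    (lamK : K ≃+* K) (hcomp : ∀ r : R, lamK (algebraMap R K r) = algebraMap R K (lam r))
    (I : Submodule R K)
    (hI : I * Submodule.span R (lamK '' (I : Set K)) = 1) :
    (∀ i j : I, ∃ r : R, algebraMap R K r = (i : K) * lamK (j : K)) ∧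
    ∃ β : I → I → R,
      (∀ i j : I, algebraMap R K (β i j) = (i : K) * lamK (j : K)) ∧
      IsSesqForm lam β ∧ IsHermitian lam β ∧ IsNondegen lam β := by
  have hinv : ∀ x : K, lamK (lamK x) = x := by
    have h : ((lamK : K →+* K).comp (lamK : K →+* K)) = RingHom.id K := by
      apply IsLocalization.ringHom_ext (nonZeroDivisors R)
      ext r
      simp [hcomp, hlam]
    intro x
    exact RingHom.congr_fun h x
  have hsm : ∀ (r : R) (x : K), lamK (r • x) = lam r • lamK x := by
    intro r x
    rw [Algebra.smul_def, Algebra.smul_def, map_mul, hcomp]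
  have hspan : ∀ b ∈ Submodule.span R (lamK '' (I : Set K)), ∃ c ∈ I, lamK c = b := by
    intro b hb
    induction hb using Submodule.span_induction with
    | mem x hx => exact hx
    | zero => exact ⟨0, I.zero_mem, map_zero _⟩
    | add x y _ _ hx hy =>
      obtain ⟨c, hc, rfl⟩ := hx
      obtain ⟨d, hd, rfl⟩ := hy
      exact ⟨c + d, I.add_mem hc hd, map_add _ _ _⟩
    | smul r x _ hx =>
      obtain ⟨c, hc, rfl⟩ := hx
      exact ⟨lam r • c, I.smul_mem _ hc, by rw [hsm, hlam]⟩
  have h1 : (1 : K) ∈ I * Submodule.span R (lamK '' (I : Set K)) := by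
    rw [hI]; exact Submodule.one_le.mp le_rfl
  have hex : ∀ i j : I, ∃ r : R, algebraMap R K r = (i : K) * lamK (j : K) := by
    intro i j
    have h : (i : K) * lamK (j : K) ∈ I * Submodule.span R (lamK '' (I : Set K)) :=
      Submodule.mul_mem_mul i.2 (Submodule.subset_span ⟨_, j.2, rfl⟩)
    rw [hI] at h
    exact Submodule.mem_one.mp h
  refine ⟨hex, ?_⟩
  choose β hβ using hex
  refine ⟨β, hβ, ⟨?_, ?_, ?_, ?_⟩, ?_, ?_, ?_⟩
  · intro x x' y
    apply hinj
    simp only [map_add, hβ, Submodule.coe_add]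
    ring
  · intro x y y'
    apply hinj
    simp only [map_add, hβ, Submodule.coe_add]
    ring
  · intro r x y
    apply hinj
    simp only [map_mul, hβ, Submodule.coe_smul, Algebra.smul_def]
    ring
  · intro r x y
    apply hinj
    simp only [map_mul, hβ, Submodule.coe_smul, Algebra.smul_def, hcomp]
    ring
  · intro x y
    apply hinj
    rw [← hcomp, hβ, hβ, map_mul, hinv, mul_comm]
  · intro x x' h
    have key : ∀ z ∈ I * Submodule.span R (lamK '' (I : Set K)), z * (x : K) = z * (x' : K) := by
      intro z hz
      induction hz using Submodule.mul_induction_on' with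
      | mem_mul_mem a ha b hb =>
        obtain ⟨c, hc, rfl⟩ := hspan b hb
        have := congrArg (algebraMap R K) (h ⟨c, hc⟩)
        rw [hβ, hβ] at this
        linear_combination a * this
      | add u _ v _ hu hv => rw [add_mul, add_mul, hu, hv]
    have := key 1 h1
    rw [one_mul, one_mul] at this
    exact Subtype.ext this
  · intro f fadd fsm
    have comm : ∀ c y : I, algebraMap R K (f y) * lamK c = algebraMap R K (f c) * lamK y := by
      intro c y
      obtain ⟨⟨p, s⟩, hp⟩ := IsLocalization.surj (nonZeroDivisors R) (c : K)
      obtain ⟨⟨q, t⟩, hq⟩ := IsLocalization.surj (nonZeroDivisors R) (y : K)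
      simp only at hp hq
      have e : ((t : R) * p) • y = ((s : R) * q) • c := by
        apply Subtype.ext
        simp only [Submodule.coe_smul, Algebra.smul_def, map_mul, ← hp, ← hq]
        ring
      have e2 := congrArg (algebraMap R K) (congrArg f e)
      rw [fsm, fsm] at e2
      simp only [map_mul, ← hcomp, ← hp, ← hq] at e2
      have us : IsUnit (lamK (algebraMap R K s)) := (IsLocalization.map_units K s).map lamK
      have ut : IsUnit (lamK (algebraMap R K t)) := (IsLocalization.map_units K t).map lamK
      apply (us.mul ut).mul_left_cancel
      linear_combination e2
    have key : ∀ z ∈ I * Submodule.span R (lamK '' (I : Set K)),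
        ∃ x : I, ∀ y : I, (x : K) * lamK y = z * algebraMap R K (f y) := by
      intro z hz
      induction hz using Submodule.mul_induction_on' with
      | mem_mul_mem a ha b hb =>
        obtain ⟨c, hc, rfl⟩ := hspan b hb
        refine ⟨f ⟨c, hc⟩ • ⟨a, ha⟩, fun y => ?_⟩
        have := comm ⟨c, hc⟩ y
        simp only [Submodule.coe_smul, Algebra.smul_def]
        linear_combination (-a) * this
      | add u _ v _ hu hv =>
        obtain ⟨x, hx⟩ := hu
        obtain ⟨x', hx'⟩ := hv
        refine ⟨x + x', fun y => ?_⟩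
        rw [Submodule.coe_add, add_mul, add_mul, hx, hx']
    obtain ⟨x, hx⟩ := key 1 h1
    refine ⟨x, fun y => hinj ?_⟩
    rw [hβ, hx, one_mul]
end

section
/- Let X and Z be schemes equipped with involutions λ_X : X ≅ X and λ_Z : Z ≅ Z (isomorphisms of schemes whose squares are the identity). Assume that every C₂-orbit of X lies in an affine open, i.e. for every point x of X there is an affine open subscheme U ⊆ X containing both x and λ_X(x), and assume the same for Z. Let X × Z denote the product of X and Z in the category of schemes (the fiber product over Spec ℤ), equipped with the product involution λ_X × λ_Z. Then every C₂-orbit of X × Z lies in an affine open: for every point p of X × Z there is an affine open subscheme W ⊆ X × Z containing both p and (λ_X × λ_Z)(p). -/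
open AlgebraicGeometry CategoryTheory CategoryTheory.Limits

lemma isAffineOpen_pullback_box {X Y S : Scheme} [IsAffine S] (f : X ⟶ S) (g : Y ⟶ S)
    {U : X.Opens} (hU : IsAffineOpen U) {V : Y.Opens} (hV : IsAffineOpen V) :
    IsAffineOpen (pullback.fst f g ⁻¹ᵁ U ⊓ pullback.snd f g ⁻¹ᵁ V) := by
  have : IsAffine U.toScheme := hU
  have : IsAffine V.toScheme := hV
  let p : pullback (U.ι ≫ f) (V.ι ≫ g) ⟶ pullback f g :=
    pullback.map _ _ _ _ U.ι V.ι (𝟙 S) (by simp) (by simp)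
  have : IsOpenImmersion p := by dsimp only [p]; infer_instance
  have h := isAffineOpen_opensRange p
  convert h using 1
  apply TopologicalSpace.Opens.ext
  simp [p, Scheme.Pullback.range_map]

/-- Let `X` and `Z` be schemes with involutions `λ_X`, `λ_Z` (isomorphisms of
schemes squaring to the identity).  If every `C₂`-orbit of `X` lies in an affine open (for
every point `x` there is an affine open containing `x` and `λ_X(x)`), and similarly for `Z`,
then every `C₂`-orbit of the product `X ⨯ Z` (with the product involution
`λ_X × λ_Z = prod.map λ_X.hom λ_Z.hom`) lies in an affine open. -/
theorem product_orbits_in_affine_opens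
    (X Z : Scheme) (lX : X ≅ X) (lZ : Z ≅ Z)
    (hlX : lX.hom ≫ lX.hom = 𝟙 X) (hlZ : lZ.hom ≫ lZ.hom = 𝟙 Z)
    (hX : ∀ x : X, ∃ U : X.Opens, IsAffineOpen U ∧ x ∈ U ∧ lX.hom.base x ∈ U)
    (hZ : ∀ z : Z, ∃ V : Z.Opens, IsAffineOpen V ∧ z ∈ V ∧ lZ.hom.base z ∈ V) :
    ∀ p : ↑(X ⨯ Z), ∃ W : (X ⨯ Z).Opens,
      IsAffineOpen W ∧ p ∈ W ∧ (prod.map lX.hom lZ.hom).base p ∈ W := by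
  intro p
  obtain ⟨U, hU, hU1, hU2⟩ := hX ((prod.fst : X ⨯ Z ⟶ X) p)
  obtain ⟨V, hV, hV1, hV2⟩ := hZ ((prod.snd : X ⨯ Z ⟶ Z) p)
  have h := (isAffineOpen_pullback_box (terminal.from X) (terminal.from Z) hU hV).preimage_of_isIso
    (prodIsoPullback X Z).hom
  have e : (prodIsoPullback X Z).hom ⁻¹ᵁ (pullback.fst (terminal.from X) (terminal.from Z) ⁻¹ᵁ U ⊓
      pullback.snd (terminal.from X) (terminal.from Z) ⁻¹ᵁ V) =
      (prod.fst : X ⨯ Z ⟶ X) ⁻¹ᵁ U ⊓ (prod.snd : X ⨯ Z ⟶ Z) ⁻¹ᵁ V := by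
    rw [Scheme.Hom.preimage_inf, ← Scheme.Hom.comp_preimage, ← Scheme.Hom.comp_preimage,
      prodIsoPullback_hom_fst, prodIsoPullback_hom_snd]
  rw [e] at h
  refine ⟨_, h, ⟨hU1, hV1⟩, ?_, ?_⟩
  · change (prod.fst : X ⨯ Z ⟶ X) ((prod.map lX.hom lZ.hom) p) ∈ U
    rw [← Scheme.Hom.comp_apply, prod.map_fst, Scheme.Hom.comp_apply]
    exact hU2
  · change (prod.snd : X ⨯ Z ⟶ Z) ((prod.map lX.hom lZ.hom) p) ∈ V
    rw [← Scheme.Hom.comp_apply, prod.map_snd, Scheme.Hom.comp_apply]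
    exact hV2
end
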